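/- arXiv:2003.10251 — 3 statements merged into one kernel-verified Lean document; each statement's English description precedes it below -/
import Mathlib

section
/- Let n ≥ 1 and let T₁, T₂ be n×n integer matrices with nonzero determinant. Write V(T) ⊆ ℤⁿ for the set consisting of the zero vector together with the n columns of T. Then there exists v ∈ ℤⁿ with V(T₁) = v + V(T₂) (i.e., the two vertex sets are translates of each other) if and only if there exists R ∈ 𝔓_n with T₁ = T₂·Rᵀ. -/
open Matrix

/-- The matrix `P_{n,i}`: the identity matrix except that every entry of its
`i`-th column equals `-1`. -/
def Pmat {n : ℕ} (i : Fin n) : Matrix (Fin n) (Fin n) ℤ :=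
  Matrix.of fun j l => if l = i then -1 else if j = l then 1 else 0

/-- The permutation matrix of the permutation `σ`. -/
def permMat {n : ℕ} (σ : Equiv.Perm (Fin n)) : Matrix (Fin n) (Fin n) ℤ :=
  Matrix.of fun j l => if j = σ l then 1 else 0

/-- `𝔓_n`: the subgroup of `GL_n(ℤ)` (the group of units of the ring of `n × n`
integer matrices) generated by the permutation matrices together with the matrices
`P_{n,1}, …, P_{n,n}`, viewed as a set of integer matrices. -/
def frakP (n : ℕ) : Set (Matrix (Fin n) (Fin n) ℤ) :=
  (fun u : (Matrix (Fin n) (Fin n) ℤ)ˣ => (u : Matrix (Fin n) (Fin n) ℤ)) ''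
    (Subgroup.closure {u : (Matrix (Fin n) (Fin n) ℤ)ˣ |
      (∃ σ : Equiv.Perm (Fin n), (u : Matrix (Fin n) (Fin n) ℤ) = permMat σ) ∨
      (∃ i : Fin n, (u : Matrix (Fin n) (Fin n) ℤ) = Pmat i)} : Set _)

/-- `V(T)`: the set consisting of the zero vector together with the `n` columns
of the matrix `T`; the vertex set of the lattice simplex `Δ(T)`. -/
def vertexSet {n : ℕ} (T : Matrix (Fin n) (Fin n) ℤ) : Set (Fin n → ℤ) :=
  insert (0 : Fin n → ℤ) (Set.range fun j => Tᵀ j)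

/-!
Adding the origin as an extra label, the `n + 1` vertices of `Δ(T)` are permuted by the symmetric
group on `Option (Fin n)`. A relabelling `τ`, followed by the translation that puts the vertex now
labelled `none` at the origin, is a linear operation on the columns, hence right multiplication by
the transpose of a matrix `R_τ`. Permutation matrices come from the `τ` fixing the origin and
`P_{n,i}` comes from the transposition of the origin with the `i`-th column; these generate the
symmetric group, so `𝔓_n` is exactly the set of all `R_τ`. If the vertices of `Δ(T₁)` are distinct,
then any translate of `V(T₂)` that equals `V(T₁)` matches the vertices by such a `τ`.
-/

open Equiv Function

section Reordering

theorem exists_perm_eq_comp_of_range_subset {ι α : Type*} [Finite ι] {f g : ι → α}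
    (hf : Injective f) (h : Set.range f ⊆ Set.range g) : ∃ σ : Perm ι, f = g ∘ σ := by
  obtain ⟨s, rfl⟩ := Set.range_subset_range_iff_exists_comp.1 h
  exact ⟨.ofBijective s (Finite.injective_iff_bijective.1 hf.of_comp), rfl⟩

theorem closure_range_optionCongr_union_range_swap {ι : Type*} [DecidableEq ι] :
    Subgroup.closure (Set.range optionCongr ∪ Set.range (swap none ∘ some)) =
      (⊤ : Subgroup (Perm (Option ι))) := by
  refine eq_top_iff.2 fun τ _ ↦ ?_
  obtain ⟨⟨a, σ⟩, rfl⟩ := Perm.decomposeOption.symm.surjective τ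
  refine mul_mem ?_ (Subgroup.subset_closure (.inl ⟨σ, rfl⟩))
  cases a with
  | none => rw [swap_self]; exact one_mem _
  | some i => exact Subgroup.subset_closure (.inr ⟨i, rfl⟩)

variable {m ι R : Type*}

/-- The labelled vertices of the simplex spanned by the origin and the columns of `T`: the origin
carries the label `none`, the `j`-th column the label `some j`. -/
def vertex [Zero R] (T : Matrix m ι R) : Option ι → m → R
  | none => 0
  | some j => T.col j

@[simp]
theorem vertex_none [Zero R] (T : Matrix m ι R) : vertex T none = 0 := rfl

@[simp]
theorem vertex_some [Zero R] (T : Matrix m ι R) (j : ι) : vertex T (some j) = T.col j := rfl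

theorem vertex_inj [Zero R] {S T : Matrix m ι R} : vertex S = vertex T ↔ S = T :=
  ⟨fun h ↦ ext_col fun j ↦ congrFun h (some j), congrArg vertex⟩

theorem vertex_injective_of_linearIndependent_col [Semiring R] [Nontrivial R] {T : Matrix m ι R}
    (h : LinearIndependent R T.col) : Injective (vertex T) :=
  Option.injective_iff.2 ⟨h.injective, by rintro ⟨j, hj⟩; exact h.ne_zero j hj⟩

theorem vertex_mul [Fintype ι] [NonUnitalNonAssocSemiring R] {κ : Type*} (T : Matrix m ι R)
    (S : Matrix ι κ R) (a : Option κ) : vertex (T * S) a = T *ᵥ vertex S a := by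
  cases a with
  | none => exact (mulVec_zero T).symm
  | some j => rfl

variable [DecidableEq ι]

/-- The matrix whose transpose, acting from the right, relabels the vertices of a simplex along `τ`
and translates the new vertex `none` to the origin; see `vertex_mul_transpose_reorderMatrix`.
Using `τ⁻¹` makes this a homomorphism rather than an antihomomorphism. -/
def reorderMatrix (R : Type*) [Ring R] (τ : Perm (Option ι)) : Matrix ι ι R :=
  of fun i ↦ vertex 1 (τ⁻¹ (some i)) - vertex 1 (τ⁻¹ none)

theorem vertex_transpose_reorderMatrix [Ring R] (τ : Perm (Option ι)) (a : Option ι) :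
    vertex (reorderMatrix R τ)ᵀ a = vertex 1 (τ⁻¹ a) - vertex 1 (τ⁻¹ none) := by
  cases a with
  | none => exact (sub_self _).symm
  | some i => rfl

theorem reorderMatrix_one [Ring R] : reorderMatrix R (1 : Perm (Option ι)) = 1 := by
  rw [← transpose_inj, ← vertex_inj]
  funext a
  simp [vertex_transpose_reorderMatrix]

variable [Fintype ι]

theorem vertex_mul_transpose_reorderMatrix [Ring R] (T : Matrix m ι R) (τ : Perm (Option ι))
    (a : Option ι) :
    vertex (T * (reorderMatrix R τ)ᵀ) a = vertex T (τ⁻¹ a) - vertex T (τ⁻¹ none) := by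
  rw [vertex_mul, vertex_transpose_reorderMatrix, mulVec_sub, ← vertex_mul, ← vertex_mul,
    Matrix.mul_one]

theorem reorderMatrix_mul [CommRing R] (σ τ : Perm (Option ι)) :
    reorderMatrix R (σ * τ) = reorderMatrix R σ * reorderMatrix R τ := by
  rw [← transpose_inj, transpose_mul, ← vertex_inj]
  funext a
  simp [vertex_mul_transpose_reorderMatrix, vertex_transpose_reorderMatrix]

/-- `reorderMatrix` as a homomorphism; over `ℤ` it maps the symmetric group on the `n + 1` vertex
labels onto `𝔓_n`. -/
def reorderHom (ι R : Type*) [DecidableEq ι] [Fintype ι] [CommRing R] :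
    Perm (Option ι) →* Matrix ι ι R where
  toFun := reorderMatrix R
  map_one' := reorderMatrix_one
  map_mul' := reorderMatrix_mul

end Reordering

section Integer

variable {n : ℕ}

theorem vertexSet_eq_range_vertex (T : Matrix (Fin n) (Fin n) ℤ) :
    vertexSet T = Set.range (vertex T) :=
  (Option.range_eq (vertex T)).symm

theorem reorderMatrix_optionCongr (σ : Perm (Fin n)) :
    reorderMatrix ℤ (optionCongr σ) = permMat σ := by
  ext j l
  change vertex (1 : Matrix (Fin n) (Fin n) ℤ) (some (σ.symm j)) l - vertex 1 none l = _
  simp [permMat, one_apply, eq_symm_apply, eq_comm]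

theorem reorderMatrix_swap_none_some (i : Fin n) :
    reorderMatrix ℤ (swap none (some i)) = Pmat i := by
  ext j l
  rcases eq_or_ne j i with rfl | hj
  · simp only [reorderMatrix, Pmat, of_apply, swap_inv, swap_apply_left, swap_apply_right,
      vertex_none, vertex_some, Pi.sub_apply, Pi.zero_apply, col_apply, one_apply]
    grind
  · have swap_some : swap none (some i) (some j) = some j :=
      swap_apply_of_ne_of_ne (Option.some_ne_none j) (by simpa using hj)
    simp only [reorderMatrix, Pmat, of_apply, swap_inv, swap_apply_left, swap_some,
      vertex_some, Pi.sub_apply, col_apply, one_apply]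
    grind

theorem frakP_eq_range_reorderMatrix : frakP n = Set.range (reorderMatrix ℤ) := by
  let φ := (reorderHom (Fin n) ℤ).toHomUnits
  have generators_eq : {u : (Matrix (Fin n) (Fin n) ℤ)ˣ | (∃ σ, u.val = permMat σ) ∨
      ∃ i, u.val = Pmat i} = φ '' (Set.range optionCongr ∪ Set.range (swap none ∘ some)) := by
    rw [Set.image_union, ← Set.range_comp, ← Set.range_comp]
    ext u
    simp [φ, reorderHom, Units.ext_iff, reorderMatrix_optionCongr, reorderMatrix_swap_none_some,
      eq_comm]
  rw [frakP, generators_eq, ← MonoidHom.map_closure, closure_range_optionCongr_union_range_swap,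
    ← MonoidHom.range_eq_map, MonoidHom.coe_range, ← Set.range_comp]
  rfl

theorem vertexSet_mul_transpose_reorderMatrix (T : Matrix (Fin n) (Fin n) ℤ)
    (τ : Perm (Option (Fin n))) :
    vertexSet (T * (reorderMatrix ℤ τ)ᵀ) = (fun x ↦ -vertex T (τ⁻¹ none) + x) '' vertexSet T := by
  simp only [vertexSet_eq_range_vertex, ← Set.range_comp]
  rw [← (τ⁻¹).surjective.range_comp (_ ∘ vertex T)]
  congr 1
  funext a
  simp [vertex_mul_transpose_reorderMatrix, sub_eq_neg_add]

theorem exists_eq_mul_transpose_reorderMatrix {T₁ T₂ : Matrix (Fin n) (Fin n) ℤ} {v : Fin n → ℤ}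
    (h : Injective (vertex T₁)) (hv : vertexSet T₁ = (fun x ↦ v + x) '' vertexSet T₂) :
    ∃ τ, T₁ = T₂ * (reorderMatrix ℤ τ)ᵀ := by
  rw [vertexSet_eq_range_vertex, vertexSet_eq_range_vertex, ← Set.range_comp] at hv
  obtain ⟨σ, hσ⟩ := exists_perm_eq_comp_of_range_subset h hv.subset
  have vertex_eq (a : Option (Fin n)) : vertex T₁ a = v + vertex T₂ (σ a) := congrFun hσ a
  have v_eq : v = -vertex T₂ (σ none) := eq_neg_of_add_eq_zero_left (vertex_eq none).symm
  refine ⟨σ⁻¹, vertex_inj.1 (funext fun a ↦ ?_)⟩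
  rw [vertex_mul_transpose_reorderMatrix, inv_inv, vertex_eq, v_eq, neg_add_eq_sub]

theorem vertexSet_translate_iff_general {T₁ T₂ : Matrix (Fin n) (Fin n) ℤ}
    (h : Injective (vertex T₁)) :
    (∃ v : Fin n → ℤ, vertexSet T₁ = (fun x => v + x) '' vertexSet T₂) ↔
    (∃ R ∈ frakP n, T₁ = T₂ * Rᵀ) := by
  rw [frakP_eq_range_reorderMatrix, Set.exists_range_iff]
  constructor
  · rintro ⟨v, hv⟩
    exact exists_eq_mul_transpose_reorderMatrix h hv
  · rintro ⟨τ, rfl⟩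
    exact ⟨_, vertexSet_mul_transpose_reorderMatrix T₂ τ⟩

end Integer

/-- The vertex sets of the lattice simplices `Δ(T₁)` and `Δ(T₂)` are translates of each
other iff `T₁ = T₂ · Rᵀ` for some `R ∈ 𝔓_n`: right multiplication by `𝔓_nᵀ` realizes
exactly the reorderings of the vertices of the simplex. -/
theorem vertexSet_translate_iff
    (n : ℕ) (hn : 1 ≤ n) (T₁ T₂ : Matrix (Fin n) (Fin n) ℤ)
    (h₁ : T₁.det ≠ 0) (h₂ : T₂.det ≠ 0) :
    (∃ v : Fin n → ℤ, vertexSet T₁ = (fun x => v + x) '' vertexSet T₂) ↔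
    (∃ R ∈ frakP n, T₁ = T₂ * Rᵀ) :=
  vertexSet_translate_iff_general
    (vertex_injective_of_linearIndependent_col (linearIndependent_cols_of_det_ne_zero h₁))
end

section
/- Let n ≥ 1 and let T₁, T₂ be n×n integer matrices with nonzero determinant. Write V(T) ⊆ ℤⁿ for the set consisting of the zero vector together with the n columns of T. Then the following are equivalent: (i) there exists v ∈ ℤⁿ with V(T₁) = v + V(T₂) and det T₁ and det T₂ have the same sign; (ii) there exists R ∈ 𝔓_n with det R = 1 and T₁ = T₂·Rᵀ. -/
open Matrix

/-!
The generators of `𝔓_n` act on `T` by `T ↦ T * Rᵀ`: permutation matrices reorder the columns,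
and `P_i` moves the origin of the simplex to its `i`-th column. So multiplication by `𝔓_n` only
translates `V(T)`. Conversely, if `V(T₁) = v + V(T₂)`, then `-v` is a vertex of `Δ(T₂)`; moving the
origin there by a generator makes the vertex sets equal, and since the `n + 1` vertices are distinct
the remaining freedom is a permutation of the columns. Elements of `𝔓_n` have determinant `±1`, and
the sign of `det T` detects which.
-/

open Set Function
open scoped Pointwise

section InsertRange

variable {ι α : Type*}

lemma range_update_eq_insert_image_compl [DecidableEq ι] (f : ι → α) (i : ι) (a : α) :
    range (update f i a) = insert a (f '' {i}ᶜ) := by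
  rw [← image_univ, ← insert_sdiff_self_of_mem (mem_univ i), ← compl_eq_univ_sdiff,
    image_insert_eq, update_self]
  exact congrArg (insert a) (image_congr fun j hj => update_of_ne hj a f)

lemma insert_range_update [DecidableEq ι] (f : ι → α) (i : ι) (a : α) :
    insert (f i) (range (update f i a)) = insert a (range f) := by
  have hf : range f = insert (f i) (f '' {i}ᶜ) := by
    simpa only [update_eq_self] using range_update_eq_insert_image_compl f i (f i)
  rw [range_update_eq_insert_image_compl, hf, insert_comm]

variable {a : α} {f g : ι → α}

lemma ncard_insert_range_eq_iff [Finite ι] :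
    (insert a (range f)).ncard = Nat.card ι + 1 ↔ Injective f ∧ a ∉ range f := by
  have hle : (range f).ncard ≤ Nat.card ι := by
    simpa only [image_univ, ncard_univ] using ncard_image_le (f := f) (s := univ)
  have heq : (range f).ncard = Nat.card ι ↔ Injective f := by
    rw [← image_univ, ← ncard_univ, ncard_image_iff, injOn_univ]
  by_cases ha : a ∈ range f
  · rw [insert_eq_of_mem ha]
    simp only [ha, not_true_eq_false, and_false, iff_false]
    omega
  · rw [ncard_insert_of_notMem ha, Nat.add_right_cancel_iff, heq, and_iff_left ha]

lemma exists_perm_comp_eq_of_range_subset [Finite ι] (hg : Injective g)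
    (h : range g ⊆ range f) : ∃ σ : Equiv.Perm ι, f ∘ σ = g := by
  obtain ⟨τ, rfl⟩ := range_subset_range_iff_exists_comp.1 h
  exact ⟨.ofBijective τ (Finite.injective_iff_bijective.1 hg.of_comp), rfl⟩

lemma exists_perm_comp_eq_of_insert_range_eq [Finite ι]
    (hcard : (insert a (range g)).ncard = Nat.card ι + 1)
    (h : insert a (range f) = insert a (range g)) : ∃ σ : Equiv.Perm ι, f ∘ σ = g := by
  obtain ⟨hg, ha⟩ := ncard_insert_range_eq_iff.1 hcard
  refine exists_perm_comp_eq_of_range_subset hg ?_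
  rw [← insert_subset_insert_iff ha, h]

end InsertRange

variable {n : ℕ}

section Generators

variable {m : Type*} (T : Matrix m (Fin n) ℤ) (σ : Equiv.Perm (Fin n)) (i : Fin n)

lemma transpose_permMat : (permMat σ)ᵀ = σ.permMatrix ℤ := by
  ext j l
  simp [permMat, PEquiv.toMatrix_apply, eq_comm]

lemma isUnit_permMat : IsUnit (permMat σ) := by
  rw [isUnit_iff_isUnit_det, ← det_transpose, transpose_permMat, det_permutation]
  exact (Equiv.Perm.sign σ).isUnit

lemma col_mul_transpose_permMat : (T * (permMat σ)ᵀ).col = T.col ∘ σ.symm := by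
  rw [transpose_permMat, PEquiv.mul_toMatrix_toPEquiv]
  rfl

lemma mul_transpose_Pmat_apply (r : m) (j : Fin n) :
    (T * (Pmat i)ᵀ) r j = -T r i + if j = i then 0 else T r j := by
  have hPmat (k : Fin n) : Pmat i j k = (if k = i then -1 else 0) +
      if k = j then (if j = i then 0 else 1) else 0 := by
    simp only [Pmat, of_apply]
    grind
  simp [mul_apply, hPmat, mul_add, Finset.sum_add_distrib]

lemma col_mul_transpose_Pmat :
    (T * (Pmat i)ᵀ).col = fun j => -T.col i +ᵥ update T.col i 0 j := by
  ext j r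
  rw [col_apply, mul_transpose_Pmat_apply]
  by_cases hj : j = i <;> simp [update, hj]

lemma Pmat_mul_self : Pmat i * Pmat i = 1 := by
  rw [← transpose_inj, transpose_mul, transpose_one]
  ext r j
  rw [mul_transpose_Pmat_apply]
  simp only [Pmat, transpose_apply, of_apply, one_apply]
  grind

lemma isUnit_Pmat : IsUnit (Pmat i) := .of_mul_eq_one _ (Pmat_mul_self i)

end Generators

section FrakP

variable {R S : Matrix (Fin n) (Fin n) ℤ}

lemma permMat_mem_frakP (σ : Equiv.Perm (Fin n)) : permMat σ ∈ frakP n :=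
  let ⟨u, hu⟩ := isUnit_permMat σ
  ⟨u, Subgroup.subset_closure (.inl ⟨σ, hu⟩), hu⟩

lemma Pmat_mem_frakP (i : Fin n) : Pmat i ∈ frakP n :=
  let ⟨u, hu⟩ := isUnit_Pmat i
  ⟨u, Subgroup.subset_closure (.inr ⟨i, hu⟩), hu⟩

lemma mul_mem_frakP (hR : R ∈ frakP n) (hS : S ∈ frakP n) : R * S ∈ frakP n := by
  obtain ⟨u, hu, rfl⟩ := hR
  obtain ⟨w, hw, rfl⟩ := hS
  exact ⟨u * w, mul_mem hu hw, u.val_mul w⟩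

lemma isUnit_det_of_mem_frakP (hR : R ∈ frakP n) : IsUnit R.det := by
  obtain ⟨u, -, rfl⟩ := hR
  exact (isUnit_iff_isUnit_det _).1 u.isUnit

end FrakP

section VertexSet

variable {R T₁ T₂ : Matrix (Fin n) (Fin n) ℤ} (T : Matrix (Fin n) (Fin n) ℤ)

lemma vertexSet_mul_transpose_permMat (σ : Equiv.Perm (Fin n)) :
    vertexSet (T * (permMat σ)ᵀ) = vertexSet T := by
  change insert 0 (range (T * (permMat σ)ᵀ).col) = insert 0 (range T.col)
  rw [col_mul_transpose_permMat, σ.symm.surjective.range_comp]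

lemma vertexSet_mul_transpose_Pmat (i : Fin n) :
    vertexSet (T * (Pmat i)ᵀ) = -T.col i +ᵥ vertexSet T := by
  change insert 0 (range (T * (Pmat i)ᵀ).col) = -T.col i +ᵥ insert 0 (range T.col)
  -- Exchanging the base vertex `0` with the `i`-th column keeps the set of vertices.
  rw [← insert_range_update T.col i 0, vadd_set_insert, vadd_set_range, vadd_eq_add,
    neg_add_cancel, col_mul_transpose_Pmat]

lemma vertexSet_mul_transpose_mem_orbit (hR : R ∈ frakP n) :
    vertexSet (T * Rᵀ) ∈ AddAction.orbit (Fin n → ℤ) (vertexSet T) := by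
  obtain ⟨u, hu, rfl⟩ := hR
  beta_reduce
  induction hu using Subgroup.closure_induction generalizing T with
  | mem u hu =>
    rcases hu with ⟨σ, hσ⟩ | ⟨i, hi⟩
    · simp only [hσ, vertexSet_mul_transpose_permMat, AddAction.mem_orbit_self]
    · simp only [hi, vertexSet_mul_transpose_Pmat, AddAction.mem_orbit]
  | one => simp only [Units.val_one, transpose_one, mul_one, AddAction.mem_orbit_self]
  | mul u w _ _ hu hw =>
    rw [Units.val_mul, transpose_mul, ← mul_assoc, ← AddAction.orbit_eq_iff,
      AddAction.orbit_eq_iff.2 (hu _), AddAction.orbit_eq_iff.2 (hw T)]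
  | inv u _ hu =>
    have h := hu (T * (↑u⁻¹ : Matrix (Fin n) (Fin n) ℤ)ᵀ)
    rw [mul_assoc, ← transpose_mul, Units.mul_inv, transpose_one, mul_one] at h
    exact AddAction.mem_orbit_symm.1 h

variable {T}

lemma ncard_vertexSet_of_det_ne_zero (hT : T.det ≠ 0) : (vertexSet T).ncard = n + 1 := by
  have hcols : LinearIndependent ℤ T.col := linearIndependent_cols_of_det_ne_zero hT
  have hcard : (insert 0 (range T.col)).ncard = Nat.card (Fin n) + 1 :=
    ncard_insert_range_eq_iff.2 ⟨hcols.injective, fun ⟨j, hj⟩ => hcols.ne_zero j hj⟩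
  rwa [Nat.card_fin] at hcard

lemma exists_eq_mul_transpose_permMat (hcard : (vertexSet T₂).ncard = n + 1)
    (h : vertexSet T₁ = vertexSet T₂) : ∃ σ, T₁ = T₂ * (permMat σ)ᵀ := by
  obtain ⟨σ, hσ⟩ : ∃ σ : Equiv.Perm (Fin n), T₁.col ∘ σ = T₂.col :=
    exists_perm_comp_eq_of_insert_range_eq (by rwa [Nat.card_fin]) h
  refine ⟨σ, ext_col fun j => congrFun (?_ : T₁.col = (T₂ * (permMat σ)ᵀ).col) j⟩
  rw [col_mul_transpose_permMat, ← hσ, comp_assoc, σ.self_comp_symm, comp_id]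

lemma exists_vertexSet_mul_transpose_eq_neg_vadd {v : Fin n → ℤ} (hv : v ∈ vertexSet T) :
    ∃ R ∈ frakP n, vertexSet (T * Rᵀ) = -v +ᵥ vertexSet T := by
  rcases hv with rfl | ⟨i, rfl⟩
  · exact ⟨permMat 1, permMat_mem_frakP 1, by
      rw [vertexSet_mul_transpose_permMat, neg_zero, zero_vadd]⟩
  · exact ⟨Pmat i, Pmat_mem_frakP i, vertexSet_mul_transpose_Pmat T i⟩

theorem vertexSet_mem_orbit_iff (hcard : (vertexSet T₂).ncard = n + 1) :
    vertexSet T₁ ∈ AddAction.orbit (Fin n → ℤ) (vertexSet T₂) ↔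
      ∃ R ∈ frakP n, T₁ = T₂ * Rᵀ := by
  constructor
  · rintro ⟨v, hv : v +ᵥ vertexSet T₂ = vertexSet T₁⟩
    have hmem : -v ∈ vertexSet T₂ := by
      have h0 : 0 ∈ v +ᵥ vertexSet T₂ := hv ▸ mem_insert 0 _
      simpa only [mem_vadd_set_iff_neg_vadd_mem, vadd_eq_add, add_zero] using h0
    obtain ⟨R, hR, hRv⟩ := exists_vertexSet_mul_transpose_eq_neg_vadd hmem
    rw [neg_neg] at hRv
    obtain ⟨σ, rfl⟩ := exists_eq_mul_transpose_permMat (T₁ := T₁) (T₂ := T₂ * Rᵀ)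
      (by rw [hRv, ncard_vadd_set, hcard]) (by rw [hRv, hv])
    exact ⟨permMat σ * R, mul_mem_frakP (permMat_mem_frakP σ) hR, by
      rw [transpose_mul, Matrix.mul_assoc]⟩
  · rintro ⟨R, hR, rfl⟩
    exact vertexSet_mul_transpose_mem_orbit T₂ hR

end VertexSet

lemma sign_mul_eq_sign_iff_of_isUnit {a u : ℤ} (ha : a ≠ 0) (hu : IsUnit u) :
    (a * u).sign = a.sign ↔ u = 1 := by
  rw [Int.sign_mul, mul_eq_left₀ (Int.sign_eq_zero_iff_zero.not.2 ha)]
  rcases Int.isUnit_iff.1 hu with rfl | rfl <;> decide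

/-- The vertex sets of `Δ(T₁)` and `Δ(T₂)` are translates of each other with
`det T₁` and `det T₂` of the same sign iff `T₁ = T₂ · Rᵀ` for some `R ∈ 𝔓_n` with
`det R = 1`: the two simplices coincide up to translation as oriented simplices. -/
theorem vertexSet_translate_oriented_iff
    (n : ℕ) (hn : 1 ≤ n) (T₁ T₂ : Matrix (Fin n) (Fin n) ℤ)
    (h₁ : T₁.det ≠ 0) (h₂ : T₂.det ≠ 0) :
    ((∃ v : Fin n → ℤ, vertexSet T₁ = (fun x => v + x) '' vertexSet T₂) ∧
        T₁.det.sign = T₂.det.sign) ↔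
    (∃ R ∈ frakP n, R.det = 1 ∧ T₁ = T₂ * Rᵀ) := by
  have hcard := ncard_vertexSet_of_det_ne_zero h₂
  have translate_iff : (∃ v : Fin n → ℤ, vertexSet T₁ = (fun x => v + x) '' vertexSet T₂) ↔
      ∃ R ∈ frakP n, T₁ = T₂ * Rᵀ :=
    (exists_congr fun _ => eq_comm).trans (vertexSet_mem_orbit_iff hcard)
  have sign_iff {R : Matrix (Fin n) (Fin n) ℤ} (hR : R ∈ frakP n) :
      (T₂ * Rᵀ).det.sign = T₂.det.sign ↔ R.det = 1 := by
    rw [det_mul, det_transpose, sign_mul_eq_sign_iff_of_isUnit h₂ (isUnit_det_of_mem_frakP hR)]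
  rw [translate_iff]
  constructor
  · rintro ⟨⟨R, hR, rfl⟩, hsign⟩
    exact ⟨R, hR, (sign_iff hR).1 hsign, rfl⟩
  · rintro ⟨R, hR, hdet, rfl⟩
    exact ⟨⟨R, hR, rfl⟩, (sign_iff hR).2 hdet⟩
end

section
/- Let n ≥ 1 and k ≥ 1. Let A_n = {x ∈ ℤ^{n+1} : x₀ + x₁ + ⋯ + x_n = 0}, a full-rank lattice in the hyperplane H = {x ∈ ℝ^{n+1} : x₀ + ⋯ + x_n = 0}. Call two additive subgroups S₁, S₂ ≤ A_n of index k isometric if there is a linear isometry g : H → H with g(A_n) = A_n and g(S₁) = S₂. Call a set V ⊂ ℤⁿ a lattice n-simplex of normalized volume k if V has exactly n+1 elements and, for some (equivalently, any) enumeration v₀, v₁, …, v_n of V, the matrix with columns v₁ − v₀, …, v_n − v₀ has determinant of absolute value k; call two such sets V₁, V₂ unimodularly equivalent if there exist L ∈ GL_n(ℤ) and t ∈ ℤⁿ with V₁ = {L·x + t : x ∈ V₂}. Then the number of isometry classes of index-k subgroups of A_n equals the number of unimodular equivalence classes of lattice n-simplices of normalized volume k. -/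
open Matrix

/-- The hyperplane `H = {x ∈ ℝ^{n+1} : x₀ + x₁ + ⋯ + x_n = 0}`. -/
def Hyp (n : ℕ) : Submodule ℝ (EuclideanSpace ℝ (Fin (n + 1))) where
  carrier := {x | ∑ i, x i = 0}
  add_mem' := by
    intro a b ha hb
    simp only [Set.mem_setOf_eq, PiLp.add_apply] at *
    rw [Finset.sum_add_distrib, ha, hb, add_zero]
  zero_mem' := by simp
  smul_mem' := by
    intro c x hx
    simp only [Set.mem_setOf_eq, PiLp.smul_apply, smul_eq_mul] at *
    rw [← Finset.mul_sum, hx, mul_zero]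

/-- The root lattice `A_n = {x ∈ ℤ^{n+1} : x₀ + x₁ + ⋯ + x_n = 0}`: the points of the
hyperplane `H` all of whose coordinates are integers. -/
noncomputable def rootAn (n : ℕ) : AddSubgroup (Hyp n) where
  carrier := {x | ∀ i, ∃ m : ℤ, (x : EuclideanSpace ℝ (Fin (n + 1))) i = (m : ℝ)}
  zero_mem' := fun i => ⟨0, by simp⟩
  add_mem' := by
    rintro a b ha hb i
    obtain ⟨p, hp⟩ := ha i
    obtain ⟨q, hq⟩ := hb i
    exact ⟨p + q, by push_cast; simp [hp, hq]⟩
  neg_mem' := by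
    rintro a ha i
    obtain ⟨p, hp⟩ := ha i
    exact ⟨-p, by push_cast; simp [hp]⟩

/-- `V ⊆ ℤⁿ` is (the vertex set of) a lattice `n`-simplex of normalized volume `k`:
`V` has exactly `n + 1` elements and for some enumeration `v₀, v₁, …, v_n` of `V` the
matrix with columns `v₁ - v₀, …, v_n - v₀` has determinant of absolute value `k`. -/
def IsLatticeSimplex (n k : ℕ) (V : Set (Fin n → ℤ)) : Prop :=
  V.ncard = n + 1 ∧
  ∃ v : Fin (n + 1) → (Fin n → ℤ), Set.range v = V ∧
    (Matrix.of fun i j : Fin n => v j.succ i - v 0 i).det.natAbs = k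

/-
Both sides count orbits of the symmetric group `S_{n+1}`. An isometry preserving `A_n` maps the
roots `e_i - e_0` to roots with pairwise inner products `1`, hence is up to sign a permutation of
the coordinates; so the left side counts orbits on the subgroups of index `k` of `A_n`. A simplex
with vertices `v_i` is determined up to unimodular equivalence and relabelling by the lattice of
integral affine functions restricted to the `v_i`; these lattices are exactly the subgroups of
index `k` of `ℤ^{n+1}` that contain the all-ones vector `1`.

By Burnside's lemma it is enough that every permutation `π` of the coordinates fixes equally many
of both kinds of subgroups. A subgroup of index `k` contains `k` times the lattice, so everything
happens modulo `k`, and a `π`-equivariant isomorphism from `(ℤ/k)^{n+1} / 1` to the sum-zero vectors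
in `(ℤ/k)^{n+1}` suffices, that is, a `π`-invariant matrix `F` whose kernel is spanned by `1` and
whose columns sum to zero. By the Chinese remainder theorem `k` may be taken to be a power of a
prime `p`. Let `q` be the largest power of `p` dividing all cycle lengths of `π`, attained at the
cycle of `b₀`. Labelling every cycle cyclically by `ℤ/q`, let `N a` be the set of points of the
cycle of `b₀` with the same label as `a`; its size is prime to `p`. Then `F = D + ΛᵀΛ` works, where
`D x = x - x ∘ π` on the cycle of `b₀` and `Λ x` takes the value `|N a| x a - ∑ b ∈ N a, x b` at
the points `a` off that cycle: off the cycle, `Λᵀ` only multiplies by the units `|N a|`, so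
`F x = 0` forces `Λ x = 0` and then `D x = 0`.
-/

open MulAction DomMulAct Equiv
open scoped Pointwise

section Orbits

variable {G α β γ : Type*} [Group G] [MulAction G β] [MulAction G γ]

theorem card_orbits_eq_of_equiv_fixedBy [Finite G]
    (h : ∀ g : G, Nonempty (fixedBy β g ≃ fixedBy γ g)) :
    Nat.card (orbitRel.Quotient G β) = Nat.card (orbitRel.Quotient G γ) := by
  have e : orbitRel.Quotient G β × G ≃ orbitRel.Quotient G γ × G :=
    (sigmaFixedByEquivOrbitsProdGroup G β).symm.trans <|
      (Equiv.sigmaCongrRight fun g => (h g).some).trans (sigmaFixedByEquivOrbitsProdGroup G γ)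
  have hcard := Nat.card_congr e
  rw [Nat.card_prod, Nat.card_prod] at hcard
  exact Nat.eq_of_mul_eq_mul_right Nat.card_pos hcard

theorem card_quot_eq_card_orbits {R : α → α → Prop} (f : α → β)
    (hR : ∀ a a', R a a' ↔ f a ∈ orbit G (f a')) (hf : ∀ b, ∃ a, f a ∈ orbit G b) :
    Nat.card (Quot R) = Nat.card (orbitRel.Quotient G β) := by
  refine Nat.card_congr (Equiv.ofBijective
    (Quot.map f fun a a' h => (hR a a').1 h) ⟨?_, ?_⟩)
  · rintro ⟨a⟩ ⟨a'⟩ h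
    exact Quot.sound ((hR a a').2 (orbitRel_apply.1 (Quotient.exact h)))
  · rintro ⟨b⟩
    obtain ⟨a, ha⟩ := hf b
    exact ⟨Quot.mk _ a, Quotient.sound (orbitRel_apply.2 ha)⟩

end Orbits

section SubgroupsOfIndex

variable {G M Q : Type*} [Group G] [AddCommGroup M] [AddCommGroup Q]
  [DistribMulAction G M] [DistribMulAction G Q]

/-- The `G`-set of subgroups of index `k` of `M` that contain the `G`-invariant vector `u`. -/
def subgroupsOfIndex (u : FixedPoints.addSubgroup G M) (k : ℕ) :
    SubMulAction G (AddSubgroup M) where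
  carrier := {T | (u : M) ∈ T ∧ T.index = k}
  smul_mem' g T := by
    rintro ⟨hu, hT⟩
    exact ⟨by simpa only [u.2 g] using AddSubgroup.smul_mem_pointwise_smul (u : M) g T hu,
      by rw [AddSubgroup.index_smul, hT]⟩

theorem smul_comap_eq_comap_smul {f : M →+ Q} {g : G} (hg : ∀ x, f (g • x) = g • f x)
    (U : AddSubgroup Q) : g • U.comap f = (g • U).comap f := by
  have hg' (x : M) : f (g⁻¹ • x) = g⁻¹ • f x := by
    rw [eq_inv_smul_iff, ← hg, smul_inv_smul]
  ext x
  simp only [AddSubgroup.mem_comap, AddSubgroup.mem_pointwise_smul_iff_inv_smul_mem, hg']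

theorem nonempty_equiv_fixedBy_subgroupsOfIndex {u : FixedPoints.addSubgroup G M} {k : ℕ}
    {f : M →+ Q} {g : G} (hf : Function.Surjective f) (hu : f u = 0)
    (hker : ∀ T ∈ subgroupsOfIndex u k, f.ker ≤ T) (hg : ∀ x, f (g • x) = g • f x) :
    Nonempty (fixedBy (subgroupsOfIndex u k) g ≃
      fixedBy (subgroupsOfIndex (0 : FixedPoints.addSubgroup G Q) k) g) := by
  let comap (U : fixedBy (subgroupsOfIndex (0 : FixedPoints.addSubgroup G Q) k) g) :
      fixedBy (subgroupsOfIndex u k) g :=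
    ⟨⟨U.1.1.comap f, by simp [hu, zero_mem],
      (AddSubgroup.index_comap_of_surjective _ hf).trans U.1.2.2⟩, Subtype.ext <|
        (smul_comap_eq_comap_smul hg _).trans <|
          congrArg (AddSubgroup.comap f) (congrArg Subtype.val U.2)⟩
  refine ⟨(Equiv.ofBijective comap ⟨fun U U' h => ?_, fun ⟨⟨T, hT⟩, hgT⟩ => ?_⟩).symm⟩
  · exact Subtype.ext <| Subtype.ext <| AddSubgroup.comap_injective hf <|
      congrArg (fun T => T.1.1) h
  · have hT' : (T.map f).comap f = T := by
      rw [AddSubgroup.comap_map_eq_self (hker T hT)]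
    have hindex : (T.map f).index = k := by
      rw [← hT.2, ← AddSubgroup.index_comap_of_surjective _ hf, hT']
    have hgU : g • T.map f = T.map f := AddSubgroup.comap_injective hf <| by
      rw [← smul_comap_eq_comap_smul hg, hT']
      exact congrArg Subtype.val hgT
    exact ⟨⟨⟨T.map f, zero_mem _, hindex⟩, Subtype.ext hgU⟩,
      Subtype.ext (Subtype.ext hT')⟩

end SubgroupsOfIndex

section ZeroSum

variable {X M N : Type*} [Fintype X] [AddCommGroup M] [AddCommGroup N]

/-- The vectors in `X → M` whose coordinates sum to zero. For `M = ℤ` this is the root lattice of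
type `A`, without its embedding in a Euclidean space. -/
def zeroSum (X M : Type*) [Fintype X] [AddCommGroup M] : AddSubgroup (X → M) :=
  (∑ i, Pi.evalAddMonoidHom (fun _ : X => M) i).ker

@[simp]
theorem mem_zeroSum {x : X → M} : x ∈ zeroSum X M ↔ ∑ i, x i = 0 := by
  simp [zeroSum, AddMonoidHom.mem_ker, AddMonoidHom.finsetSum_apply]

theorem smul_mem_zeroSum (c : (Perm X)ᵈᵐᵃ) {x : X → M} (hx : x ∈ zeroSum X M) :
    c • x ∈ zeroSum X M :=
  mem_zeroSum.2 ((Equiv.sum_comp (mk.symm c) x).trans (mem_zeroSum.1 hx))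

/-- Permutations of the coordinates act on the sum-zero vectors; the domain action `ᵈᵐᵃ` makes
`x ↦ x ∘ σ` a left action. -/
instance : DistribMulAction (Perm X)ᵈᵐᵃ (zeroSum X M) where
  smul c x := ⟨c • x.1, smul_mem_zeroSum c x.2⟩
  one_smul x := Subtype.ext (one_smul _ x.1)
  mul_smul c d x := Subtype.ext (mul_smul c d x.1)
  smul_zero c := Subtype.ext (smul_zero c)
  smul_add c x y := Subtype.ext (smul_add c x.1 y.1)

theorem card_zeroSum_mul_card [Nonempty X] :
    Nat.card (zeroSum X M) * Nat.card M = Nat.card (X → M) := by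
  classical
  have hsurj : Function.Surjective ⇑(∑ i, Pi.evalAddMonoidHom (fun _ : X => M) i) := fun m =>
    ⟨Pi.single (Classical.arbitrary X) m, by simp⟩
  rw [← AddSubgroup.card_mul_index (zeroSum X M), zeroSum, AddSubgroup.index_ker,
    AddMonoidHom.range_eq_top.2 hsurj, AddSubgroup.card_top]

/-- The map between sum-zero vectors that applies `f` to every coordinate. -/
def zeroSumMap (f : M →+ N) : zeroSum X M →+ zeroSum X N where
  toFun x := ⟨f ∘ x.1, by simp [← map_sum, mem_zeroSum.1 x.2]⟩
  map_zero' := by ext; simp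
  map_add' x y := by ext; simp

theorem zeroSumMap_smul (f : M →+ N) (c : (Perm X)ᵈᵐᵃ) (x : zeroSum X M) :
    zeroSumMap f (c • x) = c • zeroSumMap f x :=
  rfl

theorem zeroSumMap_surjective [Nonempty X] {f : M →+ N} (hf : Function.Surjective f) :
    Function.Surjective (zeroSumMap (X := X) f) := by
  classical
  rintro ⟨y, hy⟩
  choose g hg using hf
  let a := Classical.arbitrary X
  let x := fun i => g (y i)
  refine ⟨⟨x - Pi.single a (∑ i, x i), by simp⟩, ?_⟩
  ext i
  have hfx : f (∑ i, x i) = 0 := by simpa [x, hg] using hy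
  simp [zeroSumMap, x, hg, Pi.single_apply, apply_ite f, hfx]

end ZeroSum

section CycleLabelling

variable {X : Type*} (π : Perm X)

theorem exists_zmod_labelling {q : ℕ} (h : ∀ x : X, q ∣ period π x) :
    ∃ r : X → ZMod q, ∀ x, r (π x) = r x + 1 := by
  let s := Perm.SameCycle.setoid π
  choose j hj using fun x : X => (Quotient.mk_out (s := s) x : π.SameCycle _ x)
  refine ⟨fun x => j x, fun x => ?_⟩
  let o := (Quotient.mk s x).out
  have hout : (Quotient.mk s (π x)).out = o :=
    congrArg _ (Quotient.sound (Perm.sameCycle_apply_left.2 (Perm.SameCycle.refl π x)))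
  have hjπ : (π ^ j (π x)) • o = (π ^ (1 + j x)) • o := by
    rw [_root_.zpow_one_add, mul_smul, Perm.smul_def (π ^ j x), hj, ← hout]
    exact hj (π x)
  have hperiod : (period π o : ℤ) ∣ -(1 + j x) + j (π x) := by
    rw [← zpow_smul_eq_iff_period_dvd, _root_.zpow_add, mul_smul, hjπ, ← mul_smul,
      ← _root_.zpow_add, neg_add_cancel, _root_.zpow_zero, one_smul]
  have hzmod := (ZMod.intCast_zmod_eq_zero_iff_dvd _ q).2
    ((Int.natCast_dvd_natCast.2 (h o)).trans hperiod)
  push_cast at hzmod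
  linear_combination hzmod

theorem exists_period_pow_factorization_dvd [Finite X] [Nonempty X] {p : ℕ} (hp : p.Prime) :
    ∃ b : X, ∀ x : X, p ^ (period π b).factorization p ∣ period π x := by
  obtain ⟨b, hb⟩ := Finite.exists_min fun x : X => (period π x).factorization p
  refine ⟨b, fun x => (hp.pow_dvd_iff_le_factorization ?_).2 (hb x)⟩
  exact (period_pos_of_orderOf_pos (orderOf_pos π) x).ne'

variable {π}

open scoped Classical in
theorem card_sameCycle_eq_period [Fintype X] (b : X) :
    Finset.card {x | π.SameCycle b x} = period π b := by
  have horbit (x : X) : π.SameCycle b x ↔ x ∈ orbit (Subgroup.zpowers π) b := by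
    simp [mem_orbit_iff, Perm.SameCycle, Subgroup.smul_def]
  have : Fintype (orbit (Subgroup.zpowers π) b) := Fintype.ofFinite _
  rw [period_eq_minimalPeriod, minimalPeriod_eq_card, ← Fintype.card_subtype]
  exact Fintype.card_congr (Equiv.subtypeEquivRight horbit)

theorem card_eq_mul_card_fiber {q : ℕ} [NeZero q] {r : X → ZMod q} (hr : ∀ x, r (π x) = r x + 1)
    {C : Finset X} (hC : ∀ x, π x ∈ C ↔ x ∈ C) (s : ZMod q) :
    C.card = q * (C.filter (r · = s)).card := by
  have hstep (t : ZMod q) : (C.filter (r · = t + 1)).card = (C.filter (r · = t)).card := by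
    refine (Finset.card_equiv π fun x => ?_).symm
    simp [hC, hr]
  have hconst (t : ℕ) : (C.filter (r · = s + t)).card = (C.filter (r · = s)).card := by
    induction t with
    | zero => simp
    | succ t ih => rw [Nat.cast_succ, ← add_assoc, hstep, ih]
  have hfiber (t : ZMod q) : (C.filter (r · = t)).card = (C.filter (r · = s)).card := by
    rw [← hconst (t - s).val, ZMod.natCast_zmod_val, add_sub_cancel]
  rw [Finset.card_eq_sum_card_fiberwise (f := r) (t := Finset.univ) (by simp),
    Finset.sum_congr rfl fun t _ => hfiber t]
  simp [ZMod.card]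

variable (π) in
theorem exists_equivariant_neighbourhoods [Finite X] [Nonempty X] {p : ℕ} (hp : p.Prime) :
    ∃ (b₀ : X) (N : X → Finset X), (∀ a, ∀ b ∈ N a, π.SameCycle b₀ b) ∧
      (∀ a b, π b ∈ N (π a) ↔ b ∈ N a) ∧ ∀ a, ¬ p ∣ (N a).card := by
  classical
  have := Fintype.ofFinite X
  obtain ⟨b₀, hb₀⟩ := exists_period_pow_factorization_dvd π hp
  have hℓ : period π b₀ ≠ 0 := (period_pos_of_orderOf_pos (orderOf_pos π) b₀).ne'
  obtain ⟨r, hr⟩ := exists_zmod_labelling π hb₀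
  have : NeZero (p ^ (period π b₀).factorization p) := ⟨(Nat.ordProj_pos _ _).ne'⟩
  let C : Finset X := {x | π.SameCycle b₀ x}
  refine ⟨b₀, fun a => C.filter (r · = r a), by simp +contextual [C], by simp [C, hr], fun a => ?_⟩
  have hcard := card_eq_mul_card_fiber hr (C := C) (by simp [C]) (r a)
  rw [card_sameCycle_eq_period] at hcard
  have := Nat.div_eq_of_eq_mul_right (Nat.ordProj_pos _ _) hcard
  rw [← this]
  exact Nat.not_dvd_ordCompl hp hℓ

end CycleLabelling

section InvariantLaplacian

variable {X R : Type*} [Fintype X] [CommRing R] {π : Perm X}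

/-- Like the Laplacian of a connected graph, `F` has zero row and column sums and kernel the
constant vectors; moreover it commutes with the permutation `π` of the coordinates. Over a finite
ring such an `F` identifies the `π`-modules `(X → R) ⧸ R • 1` and `zeroSum X R`. -/
structure IsInvariantLaplacian (π : Perm X) (F : Matrix X X R) : Prop where
  submatrix_eq : F.submatrix π π = F
  mulVec_one : F *ᵥ 1 = 0
  one_vecMul : 1 ᵥ* F = 0
  eq_of_mulVec_eq_zero : ∀ x, F *ᵥ x = 0 → ∀ a b, x a = x b

open scoped Classical in
variable (R π) in
/-- The operator `x ↦ x - x ∘ π` on the cycle of `b₀`, extended by zero to the other cycles. -/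
noncomputable def cycleMatrix (b₀ : X) : Matrix X X R := of fun a b =>
  if π.SameCycle b₀ a then (if a = b then 1 else 0) - (if π a = b then 1 else 0) else 0

open scoped Classical in
variable (R π) in
/-- The operator comparing `x` at each point `a` outside the cycle of `b₀` with its sum over the
neighbourhood `N a`. -/
noncomputable def comparisonMatrix (b₀ : X) (N : X → Finset X) : Matrix X X R := of fun a b =>
  if π.SameCycle b₀ a then 0 else (if a = b then ((N a).card : R) else 0) - if b ∈ N a then 1 else 0

variable {b₀ : X} {N : X → Finset X}

open scoped Classical in
theorem cycleMatrix_mulVec (x : X → R) (a : X) :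
    (cycleMatrix R π b₀ *ᵥ x) a = if π.SameCycle b₀ a then x a - x (π a) else 0 := by
  split_ifs with ha <;> simp [cycleMatrix, mulVec, dotProduct, ha, sub_mul]

theorem one_vecMul_cycleMatrix : 1 ᵥ* cycleMatrix R π b₀ = 0 := by
  classical
  ext b
  have hsum : ∑ a, (if π.SameCycle b₀ a ∧ a = b then (1 : R) else 0) =
      ∑ a, if π.SameCycle b₀ a ∧ π a = b then 1 else 0 := by
    rw [← Equiv.sum_comp π]
    simp only [Perm.sameCycle_apply_right]
  simp only [cycleMatrix, vecMul, dotProduct, of_apply, Pi.one_apply, one_mul, Pi.zero_apply]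
  refine Eq.trans ?_ (sub_eq_zero.2 hsum)
  rw [← Finset.sum_sub_distrib]
  refine Finset.sum_congr rfl fun a _ => ?_
  by_cases ha : π.SameCycle b₀ a <;> simp [ha]

open scoped Classical in
theorem comparisonMatrix_mulVec (x : X → R) (a : X) :
    (comparisonMatrix R π b₀ N *ᵥ x) a =
      if π.SameCycle b₀ a then 0 else (N a).card * x a - ∑ b ∈ N a, x b := by
  split_ifs with ha <;> simp [comparisonMatrix, mulVec, dotProduct, ha, sub_mul]

theorem comparisonMatrix_mulVec_one : comparisonMatrix R π b₀ N *ᵥ 1 = 0 := by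
  classical
  ext a
  simp [comparisonMatrix_mulVec]

theorem comparisonMatrix_transpose_mulVec (hN : ∀ a, ∀ b ∈ N a, π.SameCycle b₀ b) (z : X → R)
    {a : X} (ha : ¬ π.SameCycle b₀ a) :
    ((comparisonMatrix R π b₀ N)ᵀ *ᵥ z) a = (N a).card * z a := by
  classical
  have hentry (i : X) : comparisonMatrix R π b₀ N i a = if i = a then ((N a).card : R) else 0 := by
    have : a ∉ N i := fun hai => ha (hN i a hai)
    simp only [comparisonMatrix, of_apply]
    split_ifs <;> simp_all
  simp [mulVec, dotProduct, hentry]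

theorem apply_eq_of_cycleMatrix_mulVec_eq_zero {x : X → R} (hx : cycleMatrix R π b₀ *ᵥ x = 0)
    {a : X} (ha : π.SameCycle b₀ a) : x a = x b₀ := by
  classical
  have hstep (a : X) (ha : π.SameCycle b₀ a) : x (π a) = x a := by
    have hxa := congrFun hx a
    rw [cycleMatrix_mulVec, if_pos ha] at hxa
    exact (sub_eq_zero.1 hxa).symm
  obtain ⟨i, -, rfl⟩ := ha.exists_pow_eq'
  clear ha
  induction i with
  | zero => rfl
  | succ i ih =>
    rw [pow_succ', Perm.mul_apply, hstep _ (Perm.sameCycle_pow_right.2 (.refl _ _)), ih]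

theorem comparisonMatrix_mulVec_eq_zero (hN : ∀ a, ∀ b ∈ N a, π.SameCycle b₀ b)
    (hunit : ∀ a, IsUnit ((N a).card : R)) {x : X → R}
    (hx : (cycleMatrix R π b₀ +
      (comparisonMatrix R π b₀ N)ᵀ * comparisonMatrix R π b₀ N) *ᵥ x = 0) :
    comparisonMatrix R π b₀ N *ᵥ x = 0 := by
  classical
  ext a
  by_cases ha : π.SameCycle b₀ a
  · simp [comparisonMatrix_mulVec, ha]
  · have hxa := congrFun hx a
    rw [add_mulVec, ← mulVec_mulVec, Pi.add_apply, cycleMatrix_mulVec, if_neg ha, zero_add,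
      comparisonMatrix_transpose_mulVec hN _ ha] at hxa
    exact (hunit a).mul_right_eq_zero.1 hxa

theorem apply_eq_of_cycleMatrix_add_mulVec_eq_zero (hN : ∀ a, ∀ b ∈ N a, π.SameCycle b₀ b)
    (hunit : ∀ a, IsUnit ((N a).card : R)) {x : X → R}
    (hx : (cycleMatrix R π b₀ +
      (comparisonMatrix R π b₀ N)ᵀ * comparisonMatrix R π b₀ N) *ᵥ x = 0) (a : X) :
    x a = x b₀ := by
  classical
  have hΛ := comparisonMatrix_mulVec_eq_zero hN hunit hx
  have hD : cycleMatrix R π b₀ *ᵥ x = 0 := by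
    rwa [add_mulVec, ← mulVec_mulVec, hΛ, mulVec_zero, add_zero] at hx
  by_cases ha : π.SameCycle b₀ a
  · exact apply_eq_of_cycleMatrix_mulVec_eq_zero hD ha
  · have hxa := congrFun hΛ a
    rw [comparisonMatrix_mulVec, if_neg ha, Finset.sum_congr rfl fun b hb =>
      apply_eq_of_cycleMatrix_mulVec_eq_zero hD (hN a b hb), Finset.sum_const, nsmul_eq_mul] at hxa
    exact (hunit a).mul_left_cancel (sub_eq_zero.1 hxa)

theorem isInvariantLaplacian_cycleMatrix_add (hN : ∀ a, ∀ b ∈ N a, π.SameCycle b₀ b)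
    (hπN : ∀ a b, π b ∈ N (π a) ↔ b ∈ N a) (hunit : ∀ a, IsUnit ((N a).card : R)) :
    IsInvariantLaplacian π (cycleMatrix R π b₀ +
      (comparisonMatrix R π b₀ N)ᵀ * comparisonMatrix R π b₀ N) where
  submatrix_eq := by
    classical
    have hcard (a : X) : (N (π a)).card = (N a).card :=
      (Finset.card_equiv π fun b => (hπN a b).symm).symm
    have hD : (cycleMatrix R π b₀).submatrix π π = cycleMatrix R π b₀ := by
      ext; simp [cycleMatrix]
    have hΛ : (comparisonMatrix R π b₀ N).submatrix π π = comparisonMatrix R π b₀ N := by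
      ext; simp [comparisonMatrix, hcard, hπN]
    rw [submatrix_add, Pi.add_apply, Pi.add_apply, hD,
      ← submatrix_mul_equiv _ _ π π π, ← transpose_submatrix, hΛ]
  mulVec_one := by
    classical
    rw [add_mulVec, ← mulVec_mulVec, comparisonMatrix_mulVec_one, mulVec_zero, add_zero]
    ext a
    simp [cycleMatrix_mulVec]
  one_vecMul := by
    rw [vecMul_add, ← vecMul_vecMul, vecMul_transpose, comparisonMatrix_mulVec_one, zero_vecMul,
      one_vecMul_cycleMatrix, add_zero]
  eq_of_mulVec_eq_zero x hx a b :=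
    (apply_eq_of_cycleMatrix_add_mulVec_eq_zero hN hunit hx a).trans
      (apply_eq_of_cycleMatrix_add_mulVec_eq_zero hN hunit hx b).symm

theorem IsInvariantLaplacian.pi {ι : Type*} {R : ι → Type*} [∀ i, CommRing (R i)]
    {F : ∀ i, Matrix X X (R i)} (hF : ∀ i, IsInvariantLaplacian π (F i)) :
    IsInvariantLaplacian π (of fun a b i => F i a b) where
  submatrix_eq := by
    ext a b i
    exact congrFun₂ (hF i).submatrix_eq a b
  mulVec_one := by
    ext a i
    simpa [mulVec, dotProduct] using congrFun (hF i).mulVec_one a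
  one_vecMul := by
    ext a i
    simpa [vecMul, dotProduct] using congrFun (hF i).one_vecMul a
  eq_of_mulVec_eq_zero x hx a b := by
    ext i
    refine (hF i).eq_of_mulVec_eq_zero (fun c => x c i) ?_ a b
    ext c
    simpa [mulVec, dotProduct] using congrFun (congrFun hx c) i

theorem IsInvariantLaplacian.map {R S : Type*} [CommRing R] [CommRing S] {F : Matrix X X R}
    (hF : IsInvariantLaplacian π F) (e : R ≃+* S) : IsInvariantLaplacian π (F.map e) where
  submatrix_eq := by rw [submatrix_map, hF.submatrix_eq]
  mulVec_one := by
    ext a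
    simpa [mulVec, dotProduct] using congrArg e (congrFun hF.mulVec_one a)
  one_vecMul := by
    ext a
    simpa [vecMul, dotProduct] using congrArg e (congrFun hF.one_vecMul a)
  eq_of_mulVec_eq_zero x hx a b := by
    refine e.symm.injective (hF.eq_of_mulVec_eq_zero (e.symm ∘ x) ?_ a b)
    ext c
    simpa [mulVec, dotProduct] using congrArg e.symm (congrFun hx c)

variable (π) in
theorem exists_isInvariantLaplacian_zmod [Nonempty X] {k : ℕ} (hk : k ≠ 0) :
    ∃ F : Matrix X X (ZMod k), IsInvariantLaplacian π F := by
  have hprimePow (p : k.primeFactors) :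
      ∃ F : Matrix X X (ZMod (p ^ k.factorization p)), IsInvariantLaplacian π F := by
    have hp : (p : ℕ).Prime := Nat.prime_of_mem_primeFactors p.2
    obtain ⟨b₀, N, hN, hπN, hcard⟩ := exists_equivariant_neighbourhoods π hp
    refine ⟨_, isInvariantLaplacian_cycleMatrix_add hN hπN fun a => ?_⟩
    exact (ZMod.isUnit_iff_coprime _ _).2 ((hp.coprime_iff_not_dvd.2 (hcard a)).symm.pow_right _)
  choose F hF using hprimePow
  exact ⟨_, (IsInvariantLaplacian.pi hF).map (ZMod.equivPi k hk).symm⟩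

namespace IsInvariantLaplacian

variable {F : Matrix X X R} (hF : IsInvariantLaplacian π F)

/-- Multiplication by `F`, with its values in the sum-zero vectors. -/
def toZeroSum : (X → R) →+ zeroSum X R where
  toFun x := ⟨F *ᵥ x, by
    rw [mem_zeroSum, ← one_dotProduct, dotProduct_mulVec, hF.one_vecMul, zero_dotProduct]⟩
  map_zero' := Subtype.ext (mulVec_zero F)
  map_add' x y := Subtype.ext (mulVec_add F x y)

theorem toZeroSum_smul (x : X → R) :
    hF.toZeroSum (DomMulAct.mk π • x) = DomMulAct.mk π • hF.toZeroSum x := by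
  ext a
  change (F *ᵥ (x ∘ π)) a = (F *ᵥ x) (π a)
  conv_lhs => rw [← hF.submatrix_eq]
  rw [submatrix_mulVec_equiv]
  simp [Function.comp_assoc]

theorem toZeroSum_surjective [Nonempty X] [Finite R] : Function.Surjective hF.toZeroSum := by
  have hker : Nat.card hF.toZeroSum.ker ≤ Nat.card R := by
    let a := Classical.arbitrary X
    refine Nat.card_le_card_of_injective (fun x => x.1 a) fun x y hxy => ?_
    ext b
    rw [hF.eq_of_mulVec_eq_zero _ (congrArg Subtype.val x.2) b a,
      hF.eq_of_mulVec_eq_zero _ (congrArg Subtype.val y.2) b a]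
    exact hxy
  have hrange : Nat.card hF.toZeroSum.ker * Nat.card hF.toZeroSum.range = Nat.card (X → R) := by
    rw [← AddSubgroup.index_ker, AddSubgroup.card_mul_index]
  rw [← AddMonoidHom.range_eq_top]
  refine AddSubgroup.eq_top_of_le_card _ (Nat.le_of_mul_le_mul_left ?_ (Nat.card_pos (α := R)))
  rw [mul_comm, card_zeroSum_mul_card, ← hrange]
  exact Nat.mul_le_mul_right _ hker

end IsInvariantLaplacian

end InvariantLaplacian

section CardOrbits

variable {X : Type*} [Fintype X] {k : ℕ}

/-- The all-ones vector, which is invariant under permutations of the coordinates. Viewing integer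
vectors indexed by the vertices of a simplex as functions, it is the constant function `1`. -/
def allOnes (X : Type*) : FixedPoints.addSubgroup (Perm X)ᵈᵐᵃ (X → ℤ) :=
  ⟨1, fun _ => rfl⟩

theorem zeroSumMap_castAddHom_ker_le [NeZero k] {T : AddSubgroup (zeroSum X ℤ)}
    (hT : T.index = k) : (zeroSumMap (Int.castAddHom (ZMod k))).ker ≤ T := by
  intro x hx
  have hdvd (i : X) : (k : ℤ) ∣ x.1 i :=
    (ZMod.intCast_zmod_eq_zero_iff_dvd _ k).1 (congrFun (congrArg Subtype.val hx) i)
  choose y hy using hdvd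
  have hsum : (k : ℤ) * ∑ i, y i = 0 := by
    rw [Finset.mul_sum, ← mem_zeroSum.1 x.2]
    simp only [hy]
  have hy0 : y ∈ zeroSum X ℤ :=
    mem_zeroSum.2 ((mul_eq_zero.1 hsum).resolve_left (NeZero.ne _))
  have hxy : x = T.index • (⟨y, hy0⟩ : zeroSum X ℤ) := by
    ext i
    simp [hT, hy]
  exact hxy ▸ AddSubgroup.nsmul_index_mem T _

variable [Nonempty X]

theorem ker_toZeroSum_comp_compLeft_le {π : Perm X} {F : Matrix X X (ZMod k)}
    (hF : IsInvariantLaplacian π F) {T : AddSubgroup (X → ℤ)} (hone : 1 ∈ T) (hT : T.index = k) :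
    (hF.toZeroSum.comp ((Int.castAddHom (ZMod k)).compLeft X)).ker ≤ T := by
  intro x hx
  let a := Classical.arbitrary X
  have hdvd (i : X) : (k : ℤ) ∣ x i - x a := by
    rw [← ZMod.intCast_eq_intCast_iff_dvd_sub]
    exact hF.eq_of_mulVec_eq_zero _ (congrArg Subtype.val hx) a i
  choose y hy using hdvd
  have hxy : x = x a • 1 + T.index • y := by
    ext i
    simp [hT, ← hy]
  rw [hxy]
  exact add_mem (zsmul_mem hone _) (AddSubgroup.nsmul_index_mem T y)

theorem card_orbits_zeroSum_eq_card_orbits_allOnes [NeZero k] :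
    Nat.card (orbitRel.Quotient (Perm X)ᵈᵐᵃ
      (subgroupsOfIndex (0 : FixedPoints.addSubgroup (Perm X)ᵈᵐᵃ (zeroSum X ℤ)) k)) =
    Nat.card (orbitRel.Quotient (Perm X)ᵈᵐᵃ (subgroupsOfIndex (allOnes X) k)) := by
  have : Finite (Perm X)ᵈᵐᵃ := .of_equiv _ DomMulAct.mk
  refine card_orbits_eq_of_equiv_fixedBy (G := (Perm X)ᵈᵐᵃ) fun c => ?_
  obtain ⟨π, rfl⟩ := DomMulAct.mk.surjective c
  obtain ⟨F, hF⟩ := exists_isInvariantLaplacian_zmod π (NeZero.ne k)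
  have hcast : Function.Surjective (Int.castAddHom (ZMod k)) := ZMod.intCast_surjective
  obtain ⟨eA⟩ := nonempty_equiv_fixedBy_subgroupsOfIndex (g := DomMulAct.mk π)
    (u := (0 : FixedPoints.addSubgroup (Perm X)ᵈᵐᵃ (zeroSum X ℤ)))
    (zeroSumMap_surjective hcast) (map_zero _)
    (fun T hT => zeroSumMap_castAddHom_ker_le (k := k) hT.2) (zeroSumMap_smul _ _)
  obtain ⟨eT⟩ := nonempty_equiv_fixedBy_subgroupsOfIndex (g := DomMulAct.mk π)
    (u := allOnes X) (f := hF.toZeroSum.comp ((Int.castAddHom (ZMod k)).compLeft X))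
    (hF.toZeroSum_surjective.comp hcast.comp_left)
    (Subtype.ext <| (congrArg (F *ᵥ ·) (funext fun _ => Int.cast_one)).trans hF.mulVec_one)
    (fun T hT => ker_toZeroSum_comp_compLeft_le hF hT.1 hT.2)
    (fun x => hF.toZeroSum_smul (Int.cast ∘ x))
  exact ⟨eA.trans eT.symm⟩

end CardOrbits

section Isometries

variable {n : ℕ}

theorem mem_Hyp {x : EuclideanSpace ℝ (Fin (n + 1))} : x ∈ Hyp n ↔ ∑ i, x i = 0 :=
  Iff.rfl

theorem eq_single_sub_single_of_sum_sq_eq_two {X : Type*} [Fintype X] [DecidableEq X] {x : X → ℤ}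
    (hsum : ∑ i, x i = 0) (hsq : ∑ i, x i ^ 2 = 2) :
    ∃ a b, a ≠ b ∧ x = Pi.single a 1 - Pi.single b 1 := by
  have hx : ∃ i ∈ Finset.univ, x i ≠ 0 := by
    by_contra! hx
    simp [hx] at hsq
  obtain ⟨a, -, ha⟩ := Finset.exists_pos_of_sum_zero_of_exists_nonzero x hsum hx
  obtain ⟨b, -, hb⟩ : ∃ b ∈ Finset.univ, x b < 0 := by
    obtain ⟨b, hb, hb0⟩ := Finset.exists_pos_of_sum_zero_of_exists_nonzero (s := Finset.univ) (-x)
      (by simp [hsum]) (by simpa using hx)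
    exact ⟨b, hb, by simpa using hb0⟩
  have hab : a ≠ b := by
    rintro rfl
    exact ha.not_gt hb
  have hrest : 0 ≤ ∑ i ∈ (Finset.univ.erase a).erase b, x i ^ 2 :=
    Finset.sum_nonneg fun i _ => sq_nonneg _
  rw [← Finset.add_sum_erase _ _ (Finset.mem_univ a), ← Finset.add_sum_erase _ _
    (Finset.mem_erase.2 ⟨hab.symm, Finset.mem_univ b⟩)] at hsq
  have ha1 : x a = 1 := by nlinarith
  have hb1 : x b = -1 := by nlinarith
  have hrest0 : ∑ i ∈ (Finset.univ.erase a).erase b, x i ^ 2 = 0 := by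
    rw [ha1, hb1] at hsq
    linarith
  rw [Finset.sum_eq_zero_iff_of_nonneg fun i _ => sq_nonneg _] at hrest0
  refine ⟨a, b, hab, funext fun i => ?_⟩
  by_cases hia : i = a
  · simp [hia, ha1, hab]
  by_cases hib : i = b
  · simp [hib, hb1, hab]
  · simpa [hia, hib] using hrest0 i (by simp [hia, hib])

/-- The root `e_a - e_b` of `A_n`; it is zero for `a = b`. -/
noncomputable def root (a b : Fin (n + 1)) : Hyp n :=
  ⟨EuclideanSpace.single a 1 - EuclideanSpace.single b 1, by
    simp [mem_Hyp, Finset.sum_sub_distrib]⟩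

theorem root_apply (a b i : Fin (n + 1)) :
    (root a b).1 i = (if i = a then 1 else 0) - (if i = b then 1 else 0) := by
  simp [root]

theorem root_mem_rootAn (a b : Fin (n + 1)) : root a b ∈ rootAn n :=
  fun i => ⟨(if i = a then 1 else 0) - (if i = b then 1 else 0), by simp [root_apply]⟩

theorem neg_root (a b : Fin (n + 1)) : -root a b = root b a :=
  Subtype.ext (neg_sub _ _)

theorem inner_root_root (a b c d : Fin (n + 1)) :
    inner ℝ (root a b) (root c d) = ((((if a = c then 1 else 0) - (if a = d then 1 else 0)) -
      ((if b = c then 1 else 0) - (if b = d then 1 else 0)) : ℤ) : ℝ) := by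
  rw [Submodule.coe_inner, PiLp.inner_apply]
  simp [root_apply, mul_sub, Finset.sum_sub_distrib, @eq_comm _ _ a, @eq_comm _ _ b]

theorem eq_sum_smul_root (x : Hyp n) : x = ∑ i : Fin n, x.1 i.succ • root i.succ 0 := by
  have hx := mem_Hyp.1 x.2
  rw [Fin.sum_univ_succ] at hx
  ext j
  rw [AddSubmonoidClass.coe_finsetSum, WithLp.ofLp_sum, Finset.sum_apply]
  simp only [Submodule.coe_smul, PiLp.smul_apply, root_apply, smul_eq_mul]
  cases j using Fin.cases with
  | zero =>
    simpa [(Fin.succ_ne_zero _).symm] using eq_neg_of_add_eq_zero_left hx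
  | succ j => simp [Fin.succ_ne_zero]

theorem Hyp.linearMap_ext {E : Type*} [AddCommGroup E] [Module ℝ E] {f g : Hyp n →ₗ[ℝ] E}
    (h : ∀ i : Fin n, f (root i.succ 0) = g (root i.succ 0)) : f = g := by
  ext x
  rw [eq_sum_smul_root x, map_sum, map_sum]
  simp only [map_smul, h]

theorem exists_eq_root {x : Hyp n} (hx : x ∈ rootAn n) (hnorm : inner ℝ x x = (2 : ℝ)) :
    ∃ a b, a ≠ b ∧ x = root a b := by
  choose m hm using hx
  have hsum : ∑ i, m i = 0 := by
    have := mem_Hyp.1 x.2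
    simp only [hm] at this
    exact_mod_cast this
  have hsq : ∑ i, m i ^ 2 = 2 := by
    rw [Submodule.coe_inner, PiLp.inner_apply] at hnorm
    simp only [hm, RCLike.inner_apply, conj_trivial, ← sq] at hnorm
    exact_mod_cast hnorm
  obtain ⟨a, b, hab, rfl⟩ := eq_single_sub_single_of_sum_sq_eq_two hsum hsq
  refine ⟨a, b, hab, ?_⟩
  ext i
  simp [hm, root_apply, Pi.single_apply]

/-- The isometry of the hyperplane that permutes the coordinates by `σ`. -/
noncomputable def permHyp (σ : Perm (Fin (n + 1))) : Hyp n →ₗᵢ[ℝ] Hyp n where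
  toFun x := ⟨WithLp.toLp 2 fun i => x.1 (σ i),
    mem_Hyp.2 ((Equiv.sum_comp σ x.1).trans (mem_Hyp.1 x.2))⟩
  map_add' x y := by ext; simp
  map_smul' r x := by ext; simp
  norm_map' x := by
    simp only [LinearMap.coe_mk, AddHom.coe_mk, Submodule.coe_norm, EuclideanSpace.norm_eq]
    rw [Equiv.sum_comp σ fun i => ‖x.1 i‖ ^ 2]

@[simp]
theorem permHyp_apply (σ : Perm (Fin (n + 1))) (x : Hyp n) (i : Fin (n + 1)) :
    (permHyp σ x).1 i = x.1 (σ i) :=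
  rfl

theorem permHyp_symm_root (σ : Perm (Fin (n + 1))) (a b : Fin (n + 1)) :
    permHyp σ.symm (root a b) = root (σ a) (σ b) := by
  ext i
  simp only [permHyp_apply, root_apply, Equiv.symm_apply_eq]

theorem injective_and_exists_eq_of_pairwise_xor {ι α : Type*} [Nonempty α] {a b : ι → α}
    (h : Pairwise fun i j => Xor (a i = a j) (b i = b j)) :
    (Function.Injective a ∧ ∃ c, ∀ i, b i = c) ∨ (Function.Injective b ∧ ∃ c, ∀ i, a i = c) := by
  obtain _ | ⟨⟨i₀⟩⟩ := isEmpty_or_nonempty ι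
  · exact .inl ⟨Function.injective_of_subsingleton a, Classical.arbitrary α, isEmptyElim⟩
  have hconst : (∀ i, b i = b i₀) ∨ ∀ i, a i = a i₀ := by
    by_contra! ⟨⟨i, hi⟩, j, hj⟩
    have hii₀ := h (show i ≠ i₀ by grind)
    have hji₀ := h (show j ≠ i₀ by grind)
    grind [Pairwise]
  refine hconst.imp (fun hb => ⟨fun i j hij => ?_, _, hb⟩) fun ha => ⟨fun i j hij => ?_, _, ha⟩
  · by_contra hne
    grind [h hne]
  · by_contra hne
    grind [h hne]

theorem exists_eq_permHyp_of_common_tail {f : Hyp n →ₗ[ℝ] Hyp n} {a : Fin n → Fin (n + 1)}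
    {c : Fin (n + 1)} (ha : Function.Injective a) (hc : c ∉ Set.range a)
    (hf : ∀ i : Fin n, f (root i.succ 0) = root (a i) c) :
    ∃ σ : Perm (Fin (n + 1)), f = (permHyp σ).toLinearMap := by
  let σ : Perm (Fin (n + 1)) := Equiv.ofBijective (Fin.cons c a : Fin (n + 1) → Fin (n + 1))
    (Finite.injective_iff_bijective.1 (Fin.cons_injective_iff.2 ⟨hc, ha⟩))
  refine ⟨σ.symm, Hyp.linearMap_ext fun i => ?_⟩
  rw [hf, LinearIsometry.coe_toLinearMap, permHyp_symm_root]
  rfl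

theorem exists_eq_permHyp_or_neg (g : Hyp n →ₗᵢ[ℝ] Hyp n) (hg : ∀ x ∈ rootAn n, g x ∈ rootAn n) :
    ∃ σ : Perm (Fin (n + 1)), (∀ x, g x = permHyp σ x) ∨ ∀ x, g x = -permHyp σ x := by
  have hroot (i : Fin n) : ∃ a b, a ≠ b ∧ g (root i.succ 0) = root a b := by
    refine exists_eq_root (hg _ (root_mem_rootAn _ _)) ?_
    rw [LinearIsometry.inner_map_map, inner_root_root]
    simp [(Fin.succ_ne_zero _).symm]
  choose a b hab hgab using hroot
  have hxor : Pairwise fun i j => Xor (a i = a j) (b i = b j) := by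
    intro i j hij
    have hinner : inner ℝ (g (root i.succ 0)) (g (root j.succ 0)) = (1 : ℝ) := by
      rw [LinearIsometry.inner_map_map, inner_root_root]
      simp [(Fin.succ_ne_zero _).symm, hij]
    rw [hgab, hgab, inner_root_root] at hinner
    have hint := Int.cast_eq_one.1 hinner
    have hi := hab i
    have hj := hab j
    clear * - hint hi hj
    grind
  obtain ⟨ha, c, hc⟩ | ⟨hb, c, hc⟩ := injective_and_exists_eq_of_pairwise_xor hxor
  · obtain ⟨σ, hσ⟩ := exists_eq_permHyp_of_common_tail (f := g.toLinearMap) ha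
      (by rintro ⟨i, rfl⟩; exact hab i (hc i).symm) fun i => hc i ▸ hgab i
    exact ⟨σ, .inl fun x => LinearMap.congr_fun hσ x⟩
  · obtain ⟨σ, hσ⟩ := exists_eq_permHyp_of_common_tail (f := -g.toLinearMap) hb
      (by rintro ⟨i, hi⟩; exact hab i ((hc i).trans hi.symm)) fun i => by
        rw [LinearMap.neg_apply, LinearIsometry.coe_toLinearMap, hgab, neg_root, hc]
    exact ⟨σ, .inr fun x => neg_eq_iff_eq_neg.1 (LinearMap.congr_fun hσ x)⟩

end Isometries

section Sublattices

variable {n k : ℕ}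

/-- The action through `permHyp`, for which `zeroSumToHyp` is equivariant. -/
noncomputable instance : DistribMulAction (Perm (Fin (n + 1)))ᵈᵐᵃ (Hyp n) where
  smul c x := permHyp (DomMulAct.mk.symm c) x
  one_smul _ := rfl
  mul_smul _ _ _ := rfl
  smul_zero c := map_zero (permHyp (DomMulAct.mk.symm c))
  smul_add c := map_add (permHyp (DomMulAct.mk.symm c))

theorem smul_rootAn (c : (Perm (Fin (n + 1)))ᵈᵐᵃ) : c • rootAn n = rootAn n := by
  ext x
  rw [AddSubgroup.mem_pointwise_smul_iff_inv_smul_mem]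
  exact (DomMulAct.mk.symm c⁻¹).forall_congr_right (q := fun i => ∃ m : ℤ, x.1 i = m)

theorem exists_isometry_image_eq_iff {S₁ S₂ : AddSubgroup (Hyp n)} :
    (∃ g : Hyp n →ₗᵢ[ℝ] Hyp n, g '' (rootAn n : Set (Hyp n)) = rootAn n ∧
      g '' (S₁ : Set (Hyp n)) = S₂) ↔ ∃ c : (Perm (Fin (n + 1)))ᵈᵐᵃ, c • S₁ = S₂ := by
  constructor
  · rintro ⟨g, hg, hS⟩
    obtain ⟨σ, hσ⟩ := exists_eq_permHyp_or_neg g fun x hx =>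
      hg.subset (Set.mem_image_of_mem g hx)
    refine ⟨DomMulAct.mk σ, SetLike.coe_injective ?_⟩
    have hσS : ((DomMulAct.mk σ • S₁ : AddSubgroup (Hyp n)) : Set (Hyp n)) = permHyp σ '' S₁ := rfl
    rw [hσS, ← hS]
    obtain hσ | hσ := hσ
    · exact Set.image_congr fun x _ => (hσ x).symm
    · ext y
      constructor
      · rintro ⟨x, hx, rfl⟩
        exact ⟨-x, S₁.neg_mem hx, by simp [hσ]⟩
      · rintro ⟨x, hx, rfl⟩
        exact ⟨-x, S₁.neg_mem hx, by simp [hσ]⟩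
  · rintro ⟨c, rfl⟩
    exact ⟨permHyp (DomMulAct.mk.symm c), congrArg SetLike.coe (smul_rootAn c), rfl⟩

/-- The identification of the integral sum-zero vectors with the points of `A_n ⊆ H`. -/
noncomputable def zeroSumToHyp (n : ℕ) : zeroSum (Fin (n + 1)) ℤ →+ Hyp n where
  toFun x := ⟨WithLp.toLp 2 fun i => (x.1 i : ℝ), by
    change ∑ i, (x.1 i : ℝ) = 0
    exact_mod_cast mem_zeroSum.1 x.2⟩
  map_zero' := by ext; simp
  map_add' x y := by ext; simp

theorem zeroSumToHyp_smul (c : (Perm (Fin (n + 1)))ᵈᵐᵃ) (x : zeroSum (Fin (n + 1)) ℤ) :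
    zeroSumToHyp n (c • x) = c • zeroSumToHyp n x :=
  rfl

theorem zeroSumToHyp_injective : Function.Injective (zeroSumToHyp n) := by
  intro x y hxy
  ext i
  have hi : (x.1 i : ℝ) = y.1 i := congrArg (fun z : Hyp n => z.1 i) hxy
  exact_mod_cast hi

theorem range_zeroSumToHyp : (zeroSumToHyp n).range = rootAn n := by
  ext x
  constructor
  · rintro ⟨y, rfl⟩ i
    exact ⟨y.1 i, rfl⟩
  · intro hx
    choose m hm using hx
    have hsum : ∑ i, m i = 0 := by
      have := mem_Hyp.1 x.2
      simp only [hm] at this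
      exact_mod_cast this
    refine ⟨⟨m, mem_zeroSum.2 hsum⟩, ?_⟩
    ext i
    exact (hm i).symm

theorem comap_zeroSumToHyp_inj {S₁ S₂ : AddSubgroup (Hyp n)} (h₁ : S₁ ≤ rootAn n)
    (h₂ : S₂ ≤ rootAn n) :
    S₁.comap (zeroSumToHyp n) = S₂.comap (zeroSumToHyp n) ↔ S₁ = S₂ := by
  refine ⟨fun h => ?_, congrArg _⟩
  rw [← range_zeroSumToHyp] at h₁ h₂
  rw [← AddSubgroup.map_comap_eq_self h₁, h, AddSubgroup.map_comap_eq_self h₂]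

theorem card_isometryClasses_eq_card_orbits (n k : ℕ) :
    Nat.card (Quot fun S₁ S₂ : {S : AddSubgroup (Hyp n) //
        S ≤ rootAn n ∧ S.relIndex (rootAn n) = k} =>
      ∃ g : Hyp n →ₗᵢ[ℝ] Hyp n, g '' (rootAn n : Set (Hyp n)) = rootAn n ∧
        g '' (S₁.1 : Set (Hyp n)) = S₂.1) =
    Nat.card (orbitRel.Quotient (Perm (Fin (n + 1)))ᵈᵐᵃ (subgroupsOfIndex
      (0 : FixedPoints.addSubgroup (Perm (Fin (n + 1)))ᵈᵐᵃ (zeroSum (Fin (n + 1)) ℤ)) k)) := by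
  refine card_quot_eq_card_orbits (fun S => ⟨S.1.comap (zeroSumToHyp n), zero_mem _, by
    rw [AddSubgroup.index_comap, range_zeroSumToHyp, S.2.2]⟩) (fun S₁ S₂ => ?_) fun T => ?_
  · rw [exists_isometry_image_eq_iff, mem_orbit_symm, mem_orbit_iff]
    refine exists_congr fun c => ?_
    have hc : c • S₁.1 ≤ rootAn n :=
      (AddSubgroup.pointwise_smul_le_pointwise_smul_iff.2 S₁.2.1).trans (smul_rootAn c).le
    rw [← comap_zeroSumToHyp_inj hc S₂.2.1, ← smul_comap_eq_comap_smul (zeroSumToHyp_smul c),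
      Subtype.ext_iff]
    rfl
  · have hT : (T.1.map (zeroSumToHyp n)).comap (zeroSumToHyp n) = T.1 :=
      AddSubgroup.comap_map_eq_self_of_injective zeroSumToHyp_injective _
    refine ⟨⟨T.1.map (zeroSumToHyp n), ?_, ?_⟩, ?_⟩
    · rw [← range_zeroSumToHyp]
      exact AddSubgroup.map_le_range _ _
    · rw [← range_zeroSumToHyp, ← AddSubgroup.index_comap, hT]
      exact T.2.2
    · exact ⟨1, (one_smul _ T).trans (Subtype.ext hT.symm)⟩

end Sublattices

section RowLattice

variable {ι : Type*} [Fintype ι]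

/-- The sublattice of `ℤ^ι` generated by the rows of an integral matrix. -/
def rowLattice (M : Matrix ι ι ℤ) : AddSubgroup (ι → ℤ) :=
  (LinearMap.range M.vecMulLinear).toAddSubgroup

theorem mem_rowLattice {M : Matrix ι ι ℤ} {x : ι → ℤ} : x ∈ rowLattice M ↔ ∃ l, l ᵥ* M = x :=
  Iff.rfl

variable [DecidableEq ι]

theorem index_rowLattice {M : Matrix ι ι ℤ} (hM : M.det ≠ 0) :
    (rowLattice M).index = M.det.natAbs := by
  have hinj : Function.Injective M.vecMulLinear :=
    (injective_iff_map_eq_zero _).2 fun _ => eq_zero_of_vecMul_eq_zero hM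
  have hrow : (fun i => M.vecMulLinear (Pi.basisFun ℤ ι i)) = M := by
    ext i j
    simp
  rw [AddSubgroup.index_eq_natAbs_det (Pi.basisFun ℤ ι) (rowLattice M)
    ((Pi.basisFun ℤ ι).map (LinearEquiv.ofInjective M.vecMulLinear hinj)), Pi.basisFun_det]
  exact congrArg (fun N => (Matrix.det N).natAbs) hrow

theorem exists_rowLattice_eq {U : AddSubgroup (ι → ℤ)} (hU : U.index ≠ 0) :
    ∃ M : Matrix ι ι ℤ, rowLattice M = U ∧ M.det.natAbs = U.index := by
  have : U.FiniteIndex := ⟨hU⟩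
  have : Finite ((ι → ℤ) ⧸ U.toIntSubmodule) := inferInstanceAs (Finite ((ι → ℤ) ⧸ U))
  have hrank : Module.finrank ℤ U.toIntSubmodule = Fintype.card ι := by
    rw [Submodule.finiteQuotient_iff _ |>.1 this, Module.finrank_fintype_fun_eq_card]
  let b : Module.Basis ι ℤ U.toIntSubmodule :=
    (Module.finBasisOfFinrankEq ℤ _ hrank).reindex (Fintype.equivFin ι).symm
  let M : Matrix ι ι ℤ := of fun i => (b i).1
  refine ⟨M, ?_, ?_⟩
  · have hspan : LinearMap.range M.vecMulLinear = U.toIntSubmodule := by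
      rw [range_vecMulLinear, show M.row = U.toIntSubmodule.subtype ∘ b from rfl, Set.range_comp,
        ← Submodule.map_span, b.span_eq, Submodule.map_subtype_top]
    rw [rowLattice, hspan]
    rfl
  · rw [AddSubgroup.index_eq_natAbs_det (Pi.basisFun ℤ ι) U b, Pi.basisFun_det]
    rfl

end RowLattice

section AffineValues

variable {n : ℕ}

/-- The matrix whose columns are the edges `v j - v 0` of a simplex emanating from `v 0`. -/
def edgeMatrix (v : Fin (n + 1) → Fin n → ℤ) : Matrix (Fin n) (Fin n) ℤ :=
  of fun i j => v j.succ i - v 0 i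

/-- The increments `x j - x 0` of a function on the vertices along the edges emanating from the
vertex `0`. -/
def edgeDiff (n : ℕ) : (Fin (n + 1) → ℤ) →+ (Fin n → ℤ) where
  toFun x j := x j.succ - x 0
  map_zero' := by ext; simp
  map_add' x y := funext fun _ => add_sub_add_comm _ _ _ _

@[simp]
theorem edgeDiff_apply (x : Fin (n + 1) → ℤ) (j : Fin n) : edgeDiff n x j = x j.succ - x 0 :=
  rfl

theorem edgeDiff_surjective : Function.Surjective (edgeDiff n) := fun y =>
  ⟨Fin.cons 0 y, by ext; simp⟩

theorem ker_edgeDiff_le {T : AddSubgroup (Fin (n + 1) → ℤ)} (hone : 1 ∈ T) :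
    (edgeDiff n).ker ≤ T := by
  intro x hx
  have hx0 : x = x 0 • 1 := by
    ext i
    cases i using Fin.cases with
    | zero => simp
    | succ j => simpa [sub_eq_zero] using congrFun hx j
  exact hx0 ▸ zsmul_mem hone _

/-- The lattice of functions on the vertices `v i` that are restrictions of integral affine
functions; see `mem_affineValues`. -/
def affineValues (v : Fin (n + 1) → Fin n → ℤ) : AddSubgroup (Fin (n + 1) → ℤ) :=
  (rowLattice (edgeMatrix v)).comap (edgeDiff n)

theorem vecMul_edgeMatrix (v : Fin (n + 1) → Fin n → ℤ) (l : Fin n → ℤ) (j : Fin n) :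
    (l ᵥ* edgeMatrix v) j = l ⬝ᵥ v j.succ - l ⬝ᵥ v 0 :=
  dotProduct_sub l _ _

theorem mem_affineValues {v : Fin (n + 1) → Fin n → ℤ} {x : Fin (n + 1) → ℤ} :
    x ∈ affineValues v ↔ ∃ (l : Fin n → ℤ) (c : ℤ), ∀ i, x i = l ⬝ᵥ v i + c := by
  rw [affineValues, AddSubgroup.mem_comap, mem_rowLattice]
  refine exists_congr fun l => ⟨fun h => ⟨x 0 - l ⬝ᵥ v 0, fun i => ?_⟩, ?_⟩
  · cases i using Fin.cases with
    | zero => ring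
    | succ j =>
      have hj := congrFun h j
      rw [vecMul_edgeMatrix, edgeDiff_apply] at hj
      linarith
  · rintro ⟨c, h⟩
    ext j
    rw [vecMul_edgeMatrix, edgeDiff_apply, h, h]
    ring

theorem one_mem_affineValues (v : Fin (n + 1) → Fin n → ℤ) : 1 ∈ affineValues v :=
  mem_affineValues.2 ⟨0, 1, by simp⟩

theorem index_affineValues {v : Fin (n + 1) → Fin n → ℤ} (hv : (edgeMatrix v).det ≠ 0) :
    (affineValues v).index = (edgeMatrix v).det.natAbs := by
  rw [affineValues, AddSubgroup.index_comap_of_surjective _ edgeDiff_surjective,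
    index_rowLattice hv]

theorem exists_affineValues_eq {T : AddSubgroup (Fin (n + 1) → ℤ)} (hone : 1 ∈ T)
    (hT : T.index ≠ 0) :
    ∃ v, affineValues v = T ∧ (edgeMatrix v).det.natAbs = T.index := by
  have hcomap : (T.map (edgeDiff n)).comap (edgeDiff n) = T :=
    AddSubgroup.comap_map_eq_self (ker_edgeDiff_le hone)
  have hindex : (T.map (edgeDiff n)).index = T.index := by
    rw [← AddSubgroup.index_comap_of_surjective _ edgeDiff_surjective, hcomap]
  obtain ⟨M, hM, hdet⟩ := exists_rowLattice_eq (hindex.trans_ne hT)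
  have hedge : edgeMatrix (Fin.cons 0 Mᵀ) = M := by
    ext i j
    exact sub_zero (M i j)
  exact ⟨Fin.cons 0 Mᵀ, by rw [affineValues, hedge, hM, hcomap], by rw [hedge, hdet, hindex]⟩

theorem affineValues_comp_perm (v : Fin (n + 1) → Fin n → ℤ) (σ : Perm (Fin (n + 1))) :
    affineValues (v ∘ σ) = DomMulAct.mk σ • affineValues v := by
  ext x
  rw [AddSubgroup.mem_pointwise_smul_iff_inv_smul_mem, mem_affineValues, mem_affineValues]
  refine exists_congr fun l => exists_congr fun c => ?_
  rw [← σ.forall_congr_right (q := fun i => ((DomMulAct.mk σ)⁻¹ • x) i = l ⬝ᵥ v i + c)]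
  simp [DomMulAct.smul_apply]

theorem affineValues_le_iff {v w : Fin (n + 1) → Fin n → ℤ} :
    affineValues w ≤ affineValues v ↔
      ∃ (L : Matrix (Fin n) (Fin n) ℤ) (t : Fin n → ℤ), ∀ i, w i = L *ᵥ v i + t := by
  constructor
  · intro h
    have hcoord (j : Fin n) : (fun i => w i j) ∈ affineValues v :=
      h (mem_affineValues.2 ⟨Pi.single j 1, 0, by simp⟩)
    choose L t hLt using fun j => mem_affineValues.1 (hcoord j)
    exact ⟨of L, t, fun i => funext fun j => hLt j i⟩
  · rintro ⟨L, t, hw⟩ x hx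
    obtain ⟨l, c, hx⟩ := mem_affineValues.1 hx
    refine mem_affineValues.2 ⟨l ᵥ* L, l ⬝ᵥ t + c, fun i => ?_⟩
    rw [hx, hw, dotProduct_add, dotProduct_mulVec, add_assoc]

theorem edgeMatrix_of_eq_mulVec_add {v w : Fin (n + 1) → Fin n → ℤ}
    {L : Matrix (Fin n) (Fin n) ℤ} {t : Fin n → ℤ} (hw : ∀ i, w i = L *ᵥ v i + t) :
    edgeMatrix w = L * edgeMatrix v := by
  ext i j
  have hcol : (L * edgeMatrix v) i j = (L *ᵥ (v j.succ - v 0)) i := rfl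
  rw [hcol, mulVec_sub]
  simp [edgeMatrix, hw]

theorem affineValues_eq_iff {v w : Fin (n + 1) → Fin n → ℤ} (hw : (edgeMatrix w).det ≠ 0) :
    affineValues v = affineValues w ↔
      ∃ (L : Matrix (Fin n) (Fin n) ℤ) (t : Fin n → ℤ),
        IsUnit L.det ∧ ∀ i, w i = L *ᵥ v i + t := by
  constructor
  · intro h
    obtain ⟨L, t, hLt⟩ := affineValues_le_iff.1 h.ge
    obtain ⟨L', t', hLt'⟩ := affineValues_le_iff.1 h.le
    have hdet : L.det * L'.det * (edgeMatrix w).det = 1 * (edgeMatrix w).det := by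
      rw [one_mul, mul_assoc, ← det_mul, ← edgeMatrix_of_eq_mulVec_add hLt', ← det_mul,
        ← edgeMatrix_of_eq_mulVec_add hLt]
    exact ⟨L, t, .of_mul_eq_one _ (mul_right_cancel₀ hw hdet), hLt⟩
  · rintro ⟨L, t, hL, hLt⟩
    refine le_antisymm (affineValues_le_iff.2 ⟨L⁻¹, -(L⁻¹ *ᵥ t), fun i => ?_⟩)
      (affineValues_le_iff.2 ⟨L, t, hLt⟩)
    rw [hLt, mulVec_add, mulVec_mulVec, nonsing_inv_mul _ hL, one_mulVec, add_neg_cancel_right]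

theorem injective_of_det_edgeMatrix_ne_zero {v : Fin (n + 1) → Fin n → ℤ}
    (hv : (edgeMatrix v).det ≠ 0) : Function.Injective v := by
  intro i j hij
  by_contra hne
  obtain ⟨l, c, hlc⟩ :=
    mem_affineValues.1 (AddSubgroup.nsmul_index_mem (affineValues v) (Pi.single i 1))
  have hsame := (hlc i).trans (hij ▸ (hlc j).symm)
  rw [index_affineValues hv] at hsame
  simp [Ne.symm hne, hv] at hsame

end AffineValues

section Simplices

theorem range_eq_range_iff_exists_perm {ι α : Type*} [Finite ι] {v w : ι → α}
    (hv : Function.Injective v) : Set.range v = Set.range w ↔ ∃ σ : Perm ι, v = w ∘ σ := by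
  constructor
  · intro h
    choose σ hσ using fun i => h.subset (Set.mem_range_self i)
    have hσv : w ∘ σ = v := funext hσ
    have hinj : Function.Injective σ := .of_comp (hσv ▸ hv)
    exact ⟨.ofBijective σ (Finite.injective_iff_bijective.1 hinj), hσv.symm⟩
  · rintro ⟨σ, rfl⟩
    exact σ.surjective.range_comp w

variable {n k : ℕ}

theorem exists_unimodular_image_range_eq_iff {v w : Fin (n + 1) → Fin n → ℤ}
    (hv : (edgeMatrix v).det ≠ 0) :
    (∃ (L : Matrix (Fin n) (Fin n) ℤ) (t : Fin n → ℤ), (L.det = 1 ∨ L.det = -1) ∧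
      Set.range v = (fun x => L.mulVec x + t) '' Set.range w) ↔
    ∃ c : (Perm (Fin (n + 1)))ᵈᵐᵃ, c • affineValues w = affineValues v := by
  rw [DomMulAct.mk.surjective.exists]
  simp only [← affineValues_comp_perm, affineValues_eq_iff hv, ← Int.isUnit_iff, ← Set.range_comp,
    range_eq_range_iff_exists_perm (injective_of_det_edgeMatrix_ne_zero hv), funext_iff,
    Function.comp_apply]
  tauto

theorem IsLatticeSimplex.exists_vertices {V : Set (Fin n → ℤ)} (hV : IsLatticeSimplex n k V)
    (hk : k ≠ 0) :
    ∃ v, Set.range v = V ∧ (edgeMatrix v).det ≠ 0 ∧ (edgeMatrix v).det.natAbs = k := by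
  obtain ⟨-, v, hrange, hdet⟩ := hV
  exact ⟨v, hrange, Int.natAbs_ne_zero.1 (hdet.trans_ne hk), hdet⟩

theorem isLatticeSimplex_range {v : Fin (n + 1) → Fin n → ℤ} (hv : (edgeMatrix v).det ≠ 0) :
    IsLatticeSimplex n (edgeMatrix v).det.natAbs (Set.range v) :=
  ⟨by simp [Set.ncard_range_of_injective (injective_of_det_edgeMatrix_ne_zero hv)], v, rfl, rfl⟩

theorem card_unimodularClasses_eq_card_orbits (hk : k ≠ 0) :
    Nat.card (Quot fun V₁ V₂ : {V : Set (Fin n → ℤ) // IsLatticeSimplex n k V} =>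
      ∃ (L : Matrix (Fin n) (Fin n) ℤ) (t : Fin n → ℤ), (L.det = 1 ∨ L.det = -1) ∧
        V₁.1 = (fun x => L.mulVec x + t) '' V₂.1) =
    Nat.card (orbitRel.Quotient (Perm (Fin (n + 1)))ᵈᵐᵃ
      (subgroupsOfIndex (allOnes (Fin (n + 1))) k)) := by
  choose vert hrange hdet hindex using
    fun V : {V : Set (Fin n → ℤ) // IsLatticeSimplex n k V} => V.2.exists_vertices hk
  refine card_quot_eq_card_orbits (fun V => ⟨affineValues (vert V), one_mem_affineValues _,
    (index_affineValues (hdet V)).trans (hindex V)⟩) (fun V₁ V₂ => ?_) fun ⟨T, hone, hT⟩ => ?_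
  · rw [← hrange V₁, ← hrange V₂, exists_unimodular_image_range_eq_iff (hdet V₁), mem_orbit_iff]
    exact exists_congr fun c => ⟨fun h => Subtype.ext h, congrArg Subtype.val⟩
  · obtain ⟨v, rfl, hv⟩ := exists_affineValues_eq hone (hT.trans_ne hk)
    have hv0 : (edgeMatrix v).det ≠ 0 := Int.natAbs_ne_zero.1 (by rwa [hv, hT])
    let V : {V : Set (Fin n → ℤ) // IsLatticeSimplex n k V} :=
      ⟨Set.range v, hT ▸ hv ▸ isLatticeSimplex_range hv0⟩
    obtain ⟨σ, hσ⟩ := (range_eq_range_iff_exists_perm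
      (injective_of_det_edgeMatrix_ne_zero (hdet V))).1 (hrange V)
    exact ⟨V, DomMulAct.mk σ, Subtype.ext <|
      (affineValues_comp_perm v σ).symm.trans (congrArg affineValues hσ.symm)⟩

end Simplices

/-- Proposition 1 of the paper, first half (`β_{n,k} = τ_{n,k}`): the number of isometry
classes of index-`k` subgroups of the root lattice `A_n` equals the number of unimodular
equivalence classes of `n`-dimensional lattice simplices of normalized volume `k`. -/
theorem card_sublattices_An_eq_card_simplices (n k : ℕ) (hn : 1 ≤ n) (hk : 1 ≤ k) :
    Nat.card (Quot fun S₁ S₂ : {S : AddSubgroup (Hyp n) //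
        S ≤ rootAn n ∧ S.relIndex (rootAn n) = k} =>
      ∃ g : Hyp n →ₗᵢ[ℝ] Hyp n,
        g '' (rootAn n : Set (Hyp n)) = rootAn n ∧
        g '' (S₁.1 : Set (Hyp n)) = S₂.1) =
    Nat.card (Quot fun V₁ V₂ : {V : Set (Fin n → ℤ) // IsLatticeSimplex n k V} =>
      ∃ (L : Matrix (Fin n) (Fin n) ℤ) (t : Fin n → ℤ),
        (L.det = 1 ∨ L.det = -1) ∧
        V₁.1 = (fun x => L.mulVec x + t) '' V₂.1) := by
  have : NeZero k := ⟨Nat.one_le_iff_ne_zero.1 hk⟩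
  rw [card_isometryClasses_eq_card_orbits, card_orbits_zeroSum_eq_card_orbits_allOnes,
    card_unimodularClasses_eq_card_orbits (NeZero.ne k)]
end
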